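/- Let p be an odd prime. (i) If p ≡ 3 (mod 4), then ∑_{0<n<p/2} χ_p(n) > 0. (ii) If p ≡ 1 (mod 4), then ∑_{0<n<p/4} χ_p(n) > 0. (iii) If p > 3, then ∑_{0<n<p/3} χ_p(n) > 0. (Each sum runs over all integers n in the indicated open interval.) -/

import Mathlib

/-!
Write `q = 2, 4, 3` in the three cases and `χ` for the Legendre symbol. For `0 < u < 1` with
`u ≠ 1 / q`, the Fourier series of the sawtooth function gives
`sinZeta u 1 - sinZeta (u - 1 / q) 1 = π (1_{u < 1 / q} - 1 / q)`. Since `∑ χ(n) = 0` over a full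
period, `π ∑_{0 < n < p / q} χ(n)` is the sum of the left-hand side at `u = n / p` weighted by
`χ(n)`, and its `m`-th Fourier coefficient is `Im (G (1 - e(-m / q))) χ(m)`, where `G` is the Gauss
sum of `χ`. As `G` is `√p` or `i√p` according to `p mod 4`, this coefficient equals `c χ(m) κ(m)`
with `c > 0` and a real character `κ` modulo `q`. The character sum is thus a positive multiple of
`L(1, χκ)`, which is positive: it is nonzero, and the Euler product is positive for `s > 1`.

All series are manipulated for `Re s > 1` only, and the identities are extended to `s = 1` by
continuity. The sign of `G` comes from the reciprocity law for quadratic Gauss sums.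
-/

open Complex Filter Set HurwitzZeta
open scoped Real Topology ComplexOrder ZMod

section UnitCircle

variable {z : ℂ}

theorem one_sub_mul_exp_neg_mem_slitPlane (hz : ‖z‖ = 1) (hz1 : z ≠ 1) {t : ℝ} (ht : 0 ≤ t) :
    1 - z * cexp (-t) ∈ slitPlane := by
  have hre : z.re < 1 := by
    refine lt_of_le_of_ne (hz ▸ re_le_norm z) fun h ↦ hz1 ?_
    rw [eq_coe_norm_of_nonneg (re_eq_norm.mp (h.trans hz.symm)), hz, ofReal_one]
  have hexp : Real.exp (-t) ≤ 1 := Real.exp_le_one_iff.mpr (neg_nonpos.mpr ht)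
  rw [← ofReal_neg, ← ofReal_exp]
  refine Or.inl ?_
  simp only [sub_re, one_re, re_mul_ofReal]
  nlinarith [Real.exp_pos (-t)]

theorem continuousOn_geometric_exp_neg (hz : ‖z‖ = 1) (hz1 : z ≠ 1) :
    ContinuousOn (fun t : ℝ ↦ z * cexp (-t) / (1 - z * cexp (-t))) (Ici 0) :=
  ContinuousOn.div (by fun_prop) (by fun_prop) fun _ ht ↦
    slitPlane_ne_zero (one_sub_mul_exp_neg_mem_slitPlane hz hz1 ht)

theorem tendsto_mul_exp_neg_atTop (z : ℂ) :
    Tendsto (fun t : ℝ ↦ z * cexp (-t)) atTop (𝓝 0) := by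
  have h : Tendsto (fun t : ℝ ↦ cexp (-t)) atTop (𝓝 0) := by
    rw [tendsto_exp_nhds_zero_iff]
    simpa using tendsto_neg_atTop_atBot
  simpa using h.const_mul z

theorem isBigO_geometric_exp_neg_atTop (z : ℂ) :
    (fun t : ℝ ↦ z * cexp (-t) / (1 - z * cexp (-t))) =O[atTop] fun t ↦ Real.exp (-1 * t) := by
  have hlim : Tendsto (fun t : ℝ ↦ z / (1 - z * cexp (-t))) atTop (𝓝 (z / (1 - 0))) :=
    tendsto_const_nhds.div (tendsto_const_nhds.sub (tendsto_mul_exp_neg_atTop z)) (by simp)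
  have hexp : (fun t : ℝ ↦ cexp (-t)) =O[atTop] fun t ↦ Real.exp (-1 * t) :=
    .of_bound 1 (.of_forall fun t ↦ by simp [norm_exp])
  simpa only [div_mul_eq_mul_div, one_mul] using (hlim.isBigO_one ℝ).mul hexp

theorem isBigO_geometric_exp_neg_nhdsGT (hz : ‖z‖ = 1) (hz1 : z ≠ 1) :
    (fun t : ℝ ↦ z * cexp (-t) / (1 - z * cexp (-t))) =O[𝓝[>] 0] fun t ↦ t ^ (-0 : ℝ) := by
  have h := (continuousOn_geometric_exp_neg hz hz1 0 self_mem_Ici).mono Ioi_subset_Ici_self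
  simpa using h.tendsto.isBigO_one ℝ

theorem locallyIntegrableOn_geometric_exp_neg (hz : ‖z‖ = 1) (hz1 : z ≠ 1) :
    MeasureTheory.LocallyIntegrableOn (fun t : ℝ ↦ z * cexp (-t) / (1 - z * cexp (-t))) (Ioi 0) :=
  ((continuousOn_geometric_exp_neg hz hz1).mono Ioi_subset_Ici_self).locallyIntegrableOn
    measurableSet_Ioi

theorem integral_geometric_exp_neg (hz : ‖z‖ = 1) (hz1 : z ≠ 1) :
    ∫ t : ℝ in Ioi 0, z * cexp (-t) / (1 - z * cexp (-t)) = -log (1 - z) := by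
  have hint := mellinConvergent_of_isBigO_rpow_exp zero_lt_one
    (locallyIntegrableOn_geometric_exp_neg hz hz1) (isBigO_geometric_exp_neg_atTop z)
    (isBigO_geometric_exp_neg_nhdsGT hz hz1) (s := 1) (by simp)
  have hderiv (t : ℝ) (ht : t ∈ Ici 0) : HasDerivAt (fun t : ℝ ↦ log (1 - z * cexp (-t)))
      (z * cexp (-t) / (1 - z * cexp (-t))) t := by
    have h : HasDerivAt (fun t : ℝ ↦ 1 - z * cexp (-t)) (z * cexp (-t)) t := by
      simpa using (((hasDerivAt_id t).ofReal_comp.neg.cexp).const_mul z).const_sub 1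
    exact h.clog_real (one_sub_mul_exp_neg_mem_slitPlane hz hz1 ht)
  have hlim : Tendsto (fun t : ℝ ↦ log (1 - z * cexp (-t))) atTop (𝓝 0) := by
    have h := ((tendsto_mul_exp_neg_atTop z).const_sub 1).clog (by simp)
    simpa using h
  rw [MeasureTheory.integral_Ioi_of_hasDerivAt_of_tendsto
    (hderiv 0 self_mem_Ici).continuousAt.continuousWithinAt
    (fun t ht ↦ hderiv t (mem_Ici_of_Ioi ht)) (by simpa [MellinConvergent] using hint) hlim]
  simp

end UnitCircle

theorem norm_exp_two_pi_I_mul (x : ℝ) : ‖cexp (2 * π * I * x)‖ = 1 := by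
  simp [norm_exp]

theorem exp_two_pi_I_mul_ne_one {x : ℝ} (hx : x ∈ Ioo (0 : ℝ) 1) : cexp (2 * π * I * x) ≠ 1 := by
  rw [Ne, exp_eq_one_iff]
  rintro ⟨n, hn⟩
  rw [mul_comm (n : ℂ), mul_right_inj' two_pi_I_ne_zero] at hn
  have hxn : x = n := mod_cast hn
  rw [hxn] at hx
  have h0 : 0 < n := by exact_mod_cast hx.1
  have h1 : n < 1 := by exact_mod_cast hx.2
  omega

theorem Gamma_mul_expZeta_eq_mellin (x : ℝ) {s : ℂ} (hs : 1 < s.re) :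
    Gamma s * expZeta x s = mellin (fun t : ℝ ↦
      cexp (2 * π * I * x) * cexp (-t) / (1 - cexp (2 * π * I * x) * cexp (-t))) s := by
  set z := cexp (2 * π * I * x) with hz
  have hnorm : ‖z‖ = 1 := norm_exp_two_pi_I_mul x
  have hs0 : s ≠ 0 := fun h ↦ by simp [h] at hs; linarith
  have hzeta := ((hasSum_nat_add_iff' 1).mpr (hasSum_expZeta_of_one_lt_re x hs)).mul_left (Gamma s)
  simp only [Finset.sum_range_one, Nat.cast_zero, zero_cpow hs0, div_zero, sub_zero] at hzeta
  have hmellin := hasSum_mellin (a := fun n : ℕ ↦ z ^ (n + 1)) (p := fun n ↦ (n + 1 : ℝ)) (s := s)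
    (F := fun t : ℝ ↦ z * cexp (-t) / (1 - z * cexp (-t)))
    (fun n ↦ .inr (by positivity)) (by linarith) (fun t ht ↦ ?_) ?_
  · refine hzeta.unique (hmellin.congr_fun fun n ↦ ?_)
    rw [hz, ← exp_nat_mul, mul_div_assoc]
    push_cast
    ring_nf
  · have hlt : ‖z * cexp (-t)‖ < 1 := by
      simpa [hnorm, norm_exp] using ht
    refine ((hasSum_geometric_of_norm_lt_one hlt).mul_left (z * cexp (-t))).congr_fun fun n ↦ ?_
    rw [← pow_succ', mul_pow, ← exp_nat_mul (-t : ℂ)]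
    push_cast
    ring_nf
  · simpa [hnorm] using (summable_nat_add_iff 1).mpr (Real.summable_nat_rpow_inv.mpr hs)

theorem eq_at_one_of_eq_of_one_lt_re {f g : ℂ → ℂ} (hf : ContinuousAt f 1) (hg : ContinuousAt g 1)
    (h : ∀ s : ℂ, 1 < s.re → f s = g s) : f 1 = g 1 := by
  have : (𝓝[{s : ℂ | 1 < s.re}] (1 : ℂ)).NeBot := by
    rw [← mem_closure_iff_nhdsWithin_neBot, closure_setOfPred_lt_re]
    simp
  exact tendsto_nhds_unique_of_eventuallyEq (hf.continuousWithinAt (s := {s : ℂ | 1 < s.re}))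
    hg.continuousWithinAt (eventually_mem_nhdsWithin.mono h)

theorem expZeta_one {x : ℝ} (hx : x ∈ Ioo (0 : ℝ) 1) :
    expZeta x 1 = -log (1 - cexp (2 * π * I * x)) := by
  have hnorm := norm_exp_two_pi_I_mul x
  have hz1 := exp_two_pi_I_mul_ne_one hx
  have hx0 : (x : UnitAddCircle) ≠ 0 := fun h ↦
    hx.1.ne' ((AddCircle.coe_eq_zero_iff_of_mem_Ico (Ioo_subset_Ico_self hx)).mp h)
  have hmellin := mellin_differentiableAt_of_isBigO_rpow_exp zero_lt_one
    (locallyIntegrableOn_geometric_exp_neg hnorm hz1) (isBigO_geometric_exp_neg_atTop _)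
    (isBigO_geometric_exp_neg_nhdsGT hnorm hz1) (s := 1) (by simp)
  have hzeta : ContinuousAt (fun s ↦ Gamma s * expZeta x s) 1 :=
    (differentiableAt_Gamma_one.mul (differentiableAt_expZeta x 1 (.inr hx0))).continuousAt
  have h := eq_at_one_of_eq_of_one_lt_re hzeta hmellin.continuousAt fun s ↦
    Gamma_mul_expZeta_eq_mellin x
  rw [← integral_geometric_exp_neg hnorm hz1]
  simpa [mellin] using h

theorem log_one_sub_exp_two_pi_I_mul_im {x : ℝ} (hx : x ∈ Ioo (0 : ℝ) 1) :
    (log (1 - cexp (2 * π * I * x))).im = π * (x - 1 / 2) := by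
  have hsin : 0 < Real.sin (π * x) :=
    Real.sin_pos_of_pos_of_lt_pi (mul_pos Real.pi_pos hx.1) (by nlinarith [hx.2, Real.pi_pos])
  have hpolar : 1 - cexp (2 * π * I * x) = (2 * Real.sin (π * x) : ℝ) *
      (cos (π * (x - 1 / 2) : ℝ) + sin (π * (x - 1 / 2) : ℝ) * I) := by
    have hcos : cos (π * (x - 1 / 2) : ℝ) = sin (π * x) := by
      rw [← cos_sub_pi_div_two]; push_cast; ring_nf
    have hsin : sin (π * (x - 1 / 2) : ℝ) = -cos (π * x) := by
      rw [← sin_sub_pi_div_two]; push_cast; ring_nf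
    rw [hcos, hsin, show (2 * π * I * x : ℂ) = (2 * (π * x)) * I by ring, exp_mul_I, cos_two_mul,
      sin_two_mul]
    push_cast
    linear_combination -2 * sin_sq_add_cos_sq (π * x : ℂ)
  rw [log_im, hpolar, arg_mul_cos_add_sin_mul_I (by positivity)]
  constructor <;> nlinarith [hx.1, hx.2, Real.pi_pos]

theorem sinZeta_one {x : ℝ} (hx : x ∈ Ioo (0 : ℝ) 1) : sinZeta x 1 = π * (1 / 2 - x) := by
  have him := log_one_sub_exp_two_pi_I_mul_im hx
  have hconj : 1 - cexp (2 * π * I * ((1 - x : ℝ) : ℂ)) =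
      (starRingEnd ℂ) (1 - cexp (2 * π * I * x)) := by
    rw [map_sub, map_one, ← exp_conj, ofReal_sub, ofReal_one, mul_sub, exp_sub, mul_one,
      exp_two_pi_mul_I, one_div, ← exp_neg]
    simp [map_ofNat]
  have harg : (1 - cexp (2 * π * I * x)).arg ≠ π := by
    rw [← log_im, him]
    nlinarith [hx.2, Real.pi_pos]
  have hneg : expZeta (-x : UnitAddCircle) 1 =
      -(starRingEnd ℂ) (log (1 - cexp (2 * π * I * x))) := by
    rw [← log_conj _ harg, ← hconj, ← expZeta_one ⟨by linarith [hx.2], by linarith [hx.1]⟩,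
      AddCircle.coe_sub, AddCircle.coe_period, zero_sub]
  rw [sinZeta_eq, expZeta_one hx, hneg, sub_neg_eq_add, neg_add_eq_sub, ← neg_sub, sub_conj, him]
  push_cast
  field_simp
  ring

section QuadraticLFunction

variable {N : ℕ} {χ : DirichletCharacter ℂ N}

theorem LSeries_nonneg_of_isQuadratic (hχ : MulChar.IsQuadratic χ) {s : ℝ} (hs : 1 < s) :
    0 ≤ LSeries (fun n ↦ χ n) s := by
  refine ge_of_tendsto' (DirichletCharacter.LSeries_eulerProduct χ (by simpa)) fun n ↦
    Finset.prod_nonneg fun p hp ↦ ?_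
  have hpow : (p : ℂ) ^ (-s : ℂ) = ((p : ℝ) ^ (-s) : ℝ) := by
    rw [← ofReal_natCast, ← ofReal_neg, ofReal_cpow p.cast_nonneg]
  have hle : (p : ℝ) ^ (-s) ≤ 1 := Real.rpow_le_one_of_one_le_of_nonpos
    (mod_cast (Nat.prime_of_mem_primesBelow hp).one_le) (by linarith)
  have hpos : 0 ≤ (p : ℝ) ^ (-s) := by positivity
  rw [hpow]
  obtain ⟨x, hx, hx1⟩ : ∃ x : ℝ, χ p * ((p : ℝ) ^ (-s) : ℝ) = x ∧ x ≤ 1 := by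
    rcases hχ p with h | h | h <;> rw [h]
    exacts [⟨0, by simp, zero_le_one⟩, ⟨_, one_mul _, hle⟩, ⟨-p ^ (-s), by simp, by linarith⟩]
  rw [hx]
  exact_mod_cast inv_nonneg.mpr (sub_nonneg.mpr hx1)

variable [NeZero N]

theorem LFunction_one_pos_of_isQuadratic (hχ : MulChar.IsQuadratic χ) (hχ1 : χ ≠ 1) :
    0 < χ.LFunction 1 := by
  refine lt_of_le_of_ne ?_ (DirichletCharacter.LFunction_apply_one_ne_zero hχ1).symm
  have hlim : Tendsto (fun s : ℝ ↦ χ.LFunction s) (𝓝[>] 1) (𝓝 (χ.LFunction 1)) :=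
    ((DirichletCharacter.differentiable_LFunction hχ1).continuous.comp
      continuous_ofReal).continuousWithinAt
  refine ge_of_tendsto hlim (eventually_mem_nhdsWithin.mono fun s hs ↦ ?_)
  rw [DirichletCharacter.LFunction_eq_LSeries χ (by simpa using hs)]
  exact LSeries_nonneg_of_isQuadratic hχ hs

end QuadraticLFunction

theorem inv_re_pos {z : ℂ} (hz : 0 < z.re) : 0 < z⁻¹.re := by
  rw [inv_re]
  exact div_pos hz (normSq_pos.mpr fun h ↦ by simp [h] at hz)

section ThetaAsymptotics

theorem cpow_mul_tsum_exp_mul_exp_neg_sq (x : ℝ) {w : ℂ} (hw : 0 < w.re) :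
    w ^ (1 / 2 : ℂ) * ∑' n : ℤ, cexp (2 * π * I * x * n) * cexp (-π * w * n ^ 2) =
      ∑' n : ℤ, cexp (-π / w * (n - x) ^ 2) := by
  have hw0 : w ^ (1 / 2 : ℂ) ≠ 0 := by
    simp only [ne_eq, cpow_eq_zero_iff, not_and_or]
    exact .inl fun h ↦ by simp [h] at hw
  have h := tsum_exp_neg_quadratic hw (I * x)
  rw [one_div_mul_eq_div, eq_div_iff hw0, mul_comm] at h
  convert h using 4 with n n
  · rw [← exp_add]
    ring_nf
  · rw [← mul_assoc, I_mul_I]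
    ring

theorem tendsto_tsum_exp_neg_sq_sub {ι : Type*} {l : Filter ι} {w : ι → ℂ}
    (hw : Tendsto (fun i ↦ (w i)⁻¹.re) l atTop) {x : ℝ} (hx : x ∈ Ico (0 : ℝ) 1) :
    Tendsto (fun i ↦ ∑' n : ℤ, cexp (-π / w i * (n - x) ^ 2)) l (𝓝 (if x = 0 then 1 else 0)) := by
  have hnorm (i : ι) (n : ℤ) :
      ‖cexp (-π / w i * (n - x) ^ 2)‖ = Real.exp (-π * (n - x) ^ 2 * (w i)⁻¹.re) := by
    rw [norm_exp, show -π / w i * (n - x) ^ 2 = ((-π * (n - x) ^ 2 : ℝ) : ℂ) * (w i)⁻¹ by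
      push_cast; ring, re_ofReal_mul]
  have hterm (n : ℤ) : Tendsto (fun i ↦ cexp (-π / w i * (n - x) ^ 2)) l
      (𝓝 (if (n : ℝ) = x then 1 else 0)) := by
    split_ifs with hn
    · simp [← hn, tendsto_const_nhds]
    · rw [tendsto_zero_iff_norm_tendsto_zero]
      have hneg : -π * (n - x) ^ 2 < 0 :=
        mul_neg_of_neg_of_pos (neg_neg_of_pos Real.pi_pos) (sq_pos_of_ne_zero (sub_ne_zero.mpr hn))
      simpa only [hnorm, Function.comp_def] using
        Real.tendsto_exp_atBot.comp (hw.const_mul_atTop_of_neg hneg)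
  have hsum : ∑' n : ℤ, (if (n : ℝ) = x then 1 else 0 : ℂ) = if x = 0 then 1 else 0 := by
    rw [tsum_eq_single 0 fun n hn ↦ if_neg fun h ↦ hn ?_]
    · simp [eq_comm]
    · rw [← h] at hx
      have h0 : 0 ≤ n := mod_cast hx.1
      have h1 : n < 1 := mod_cast hx.2
      omega
  rw [← hsum]
  refine tendsto_tsum_of_dominated_convergence (hasSum_int_evenKernel (-x) one_pos).summable
    hterm ?_
  filter_upwards [hw.eventually_ge_atTop 1] with i hi n
  rw [hnorm, Real.exp_le_exp, ← sub_eq_add_neg]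
  exact mul_le_mul_of_nonpos_left hi
    (mul_nonpos_of_nonpos_of_nonneg (neg_nonpos.mpr Real.pi_pos.le) (sq_nonneg _))

theorem summable_exp_mul_exp_neg_sq (x : ℝ) {w : ℂ} (hw : 0 < w.re) :
    Summable fun n : ℤ ↦ cexp (2 * π * I * x * n) * cexp (-π * w * n ^ 2) := by
  refine ((summable_jacobiTheta₂_term_iff x (I * w)).mpr (by simpa)).congr fun n ↦ ?_
  rw [jacobiTheta₂_term, ← exp_add]
  congr 1
  linear_combination π * n ^ 2 * w * I_sq

variable {N : ℕ} [NeZero N]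

theorem stdAddChar_mul_intCast (j : ZMod N) (n : ℤ) :
    ZMod.stdAddChar (j * (n : ZMod N)) = cexp (2 * π * I * (j.val / N : ℝ) * n) := by
  have h : j * (n : ZMod N) = ((j.val * n : ℤ) : ZMod N) := by push_cast; simp
  rw [h, ZMod.stdAddChar_coe]
  push_cast
  ring_nf

theorem cpow_mul_tsum_mul_exp_neg_sq (f : ZMod N → ℂ) {w : ℂ} (hw : 0 < w.re) :
    w ^ (1 / 2 : ℂ) * ∑' n : ℤ, f n * cexp (-π * w * n ^ 2) =
      (N : ℂ)⁻¹ * ∑ j, 𝓕 f j * ∑' n : ℤ, cexp (-π / w * (n - (j.val / N : ℝ)) ^ 2) := by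
  have hinv (n : ℤ) : f n = (N : ℂ)⁻¹ * ∑ j, 𝓕 f j * cexp (2 * π * I * (j.val / N : ℝ) * n) := by
    conv_lhs => rw [← LinearEquiv.symm_apply_apply ZMod.dft f, ZMod.invDFT_apply]
    simp only [stdAddChar_mul_intCast, smul_eq_mul, mul_comm]
  have hterm (n : ℤ) : f n * cexp (-π * w * n ^ 2) = (N : ℂ)⁻¹ * ∑ j, 𝓕 f j *
      (cexp (2 * π * I * (j.val / N : ℝ) * n) * cexp (-π * w * n ^ 2)) := by
    simp only [hinv, mul_assoc, Finset.sum_mul]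
  simp_rw [hterm, tsum_mul_left]
  rw [Summable.tsum_finsetSum fun j _ ↦ (summable_exp_mul_exp_neg_sq _ hw).mul_left _]
  simp_rw [tsum_mul_left, ← cpow_mul_tsum_exp_mul_exp_neg_sq _ hw, Finset.mul_sum]
  exact Finset.sum_congr rfl fun j _ ↦ by ring

theorem tendsto_cpow_mul_tsum_mul_exp_neg_sq {ι : Type*} {l : Filter ι} {w : ι → ℂ}
    (hw : Tendsto (fun i ↦ (w i)⁻¹.re) l atTop) (f : ZMod N → ℂ) :
    Tendsto (fun i ↦ w i ^ (1 / 2 : ℂ) * ∑' n : ℤ, f n * cexp (-π * w i * n ^ 2)) l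
      (𝓝 ((∑ a, f a) / N)) := by
  have hlim : Tendsto (fun i ↦ (N : ℂ)⁻¹ * ∑ j, 𝓕 f j *
      ∑' n : ℤ, cexp (-π / w i * (n - (j.val / N : ℝ)) ^ 2)) l
      (𝓝 ((N : ℂ)⁻¹ * ∑ j : ZMod N, 𝓕 f j * if (j.val / N : ℝ) = 0 then 1 else 0)) := by
    refine (tendsto_finsetSum _ fun j _ ↦
      (tendsto_tsum_exp_neg_sq_sub hw ?_).const_mul _).const_mul _
    have hN : (0 : ℝ) < N := mod_cast NeZero.pos N
    exact ⟨by positivity, (div_lt_one hN).mpr (mod_cast j.val_lt)⟩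
  have hval : (N : ℂ)⁻¹ * ∑ j : ZMod N, 𝓕 f j * (if (j.val / N : ℝ) = 0 then 1 else 0) =
      (∑ a, f a) / N := by
    simp [NeZero.ne, ZMod.val_eq_zero, -ZMod.natCast_val, ZMod.dft_apply_zero, div_eq_inv_mul]
  rw [← hval]
  refine hlim.congr' ?_
  filter_upwards [hw.eventually_gt_atTop 0] with i hi
  exact (cpow_mul_tsum_mul_exp_neg_sq f (by simpa using inv_re_pos hi)).symm

end ThetaAsymptotics

section GaussSum

/-- The quadratic Gauss sum `∑ r mod N, e(a r² / N)`, where `e(x) = exp(2πix)`. -/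
noncomputable def quadraticGaussSum (N : ℕ) [NeZero N] (a : ℤ) : ℂ :=
  ∑ r : ZMod N, ZMod.stdAddChar ((a : ZMod N) * r ^ 2)

theorem tendsto_cpow_mul_tsum_quadraticGaussSum (N : ℕ) [NeZero N] (a : ℤ) {ι : Type*}
    {l : Filter ι} {w : ι → ℂ} (hw : Tendsto (fun i ↦ (w i)⁻¹.re) l atTop) :
    Tendsto (fun i ↦ w i ^ (1 / 2 : ℂ) * ∑' n : ℤ, cexp (-π * (w i - 2 * I * a / N) * n ^ 2)) l
      (𝓝 (quadraticGaussSum N a / N)) := by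
  refine (tendsto_cpow_mul_tsum_mul_exp_neg_sq hw
    fun r : ZMod N ↦ ZMod.stdAddChar ((a : ZMod N) * r ^ 2)).congr fun i ↦ ?_
  congr 1
  refine tsum_congr fun n ↦ ?_
  rw [← Int.cast_pow, ← Int.cast_mul, ZMod.stdAddChar_coe, ← exp_add]
  push_cast
  ring_nf

theorem ofReal_mul_cpow {r : ℝ} (hr : 0 < r) {x : ℂ} (hx : x ≠ 0) (y : ℂ) :
    (r * x : ℂ) ^ y = (r : ℂ) ^ y * x ^ y := by
  have hr0 : (r : ℂ) ≠ 0 := mod_cast hr.ne'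
  rw [cpow_def_of_ne_zero (mul_ne_zero hr0 hx), cpow_def_of_ne_zero hr0, cpow_def_of_ne_zero hx,
    log_ofReal_mul hr hx, add_mul, exp_add, ofReal_log hr.le]

theorem ofReal_add_ofReal_mul_I_ne_zero {b : ℝ} (hb : b ≠ 0) (t : ℝ) : (t + b * I : ℂ) ≠ 0 :=
  fun h ↦ hb (by simpa using congrArg im h)

theorem tendsto_inv_re_mul_neg_inv {b : ℝ} (hb : b ≠ 0) :
    Tendsto (fun t : ℝ ↦ (t * -(b * I * (t + b * I))⁻¹ : ℂ)⁻¹.re) (𝓝[>] 0) atTop := by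
  have h : Tendsto (fun t : ℝ ↦ b ^ 2 * t⁻¹) (𝓝[>] 0) atTop :=
    tendsto_inv_nhdsGT_zero.const_mul_atTop (by positivity)
  refine h.congr' (eventually_mem_nhdsWithin.mono fun t ht ↦ ?_)
  have ht0 : (t : ℂ) ≠ 0 := mod_cast ht.ne'
  have hinv : (t * -(b * I * (t + b * I))⁻¹ : ℂ)⁻¹ = (b ^ 2 * t⁻¹ : ℝ) + (-b : ℝ) * I := by
    rw [mul_inv, inv_neg, inv_inv]
    push_cast
    field_simp
    linear_combination -b * I_sq
  simp only [hinv, add_re, ofReal_re, re_ofReal_mul, I_re, mul_zero, add_zero]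

theorem cpow_mul_tsum_neg_inv {b t : ℝ} (hb : b ≠ 0) (ht : 0 < t) :
    (t * -(b * I * (t + b * I))⁻¹ : ℂ) ^ (1 / 2 : ℂ) *
        ∑' n : ℤ, cexp (-π * (t * -(b * I * (t + b * I))⁻¹ + (b * I)⁻¹) * n ^ 2) =
      (-(b * I * (t + b * I))⁻¹) ^ (1 / 2 : ℂ) * (t + b * I) ^ (1 / 2 : ℂ) *
        (t ^ (1 / 2 : ℂ) * ∑' n : ℤ, cexp (-π * (t + b * I) * n ^ 2)) := by
  have hne := ofReal_add_ofReal_mul_I_ne_zero hb t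
  have hb0 : (b : ℂ) ≠ 0 := mod_cast hb
  have hv0 : -(b * I * (t + b * I))⁻¹ ≠ 0 := by simp [hb, hne]
  have hsplit : (t * -(b * I * (t + b * I))⁻¹ + (b * I)⁻¹ : ℂ) = (t + b * I)⁻¹ := by
    field_simp
    ring
  have hcpow : (t + b * I) ^ (1 / 2 : ℂ) ≠ 0 := by simp [cpow_eq_zero_iff, hne]
  rw [hsplit, ofReal_mul_cpow ht hv0, tsum_exp_neg_mul_int_sq (a := t + b * I) (by simpa)]
  field_simp

theorem tendsto_neg_inv_cpow_mul_cpow {b : ℝ} (hb : b ≠ 0) :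
    Tendsto (fun t : ℝ ↦ (-(b * I * (t + b * I))⁻¹) ^ (1 / 2 : ℂ) * (t + b * I) ^ (1 / 2 : ℂ))
      (𝓝[>] 0) (𝓝 ((|b|⁻¹ : ℝ) * (b * I) ^ (1 / 2 : ℂ))) := by
  have hb0 : (b : ℂ) ≠ 0 := mod_cast hb
  have hval : -(b * I * ((0 : ℝ) + b * I))⁻¹ = ((|b|⁻¹ ^ 2 : ℝ) : ℂ) := by
    rw [inv_pow, sq_abs, ofReal_zero, zero_add, mul_mul_mul_comm, I_mul_I]
    push_cast
    field_simp
  have hsqrt : ((|b|⁻¹ : ℝ) : ℂ) = (-(b * I * ((0 : ℝ) + b * I))⁻¹) ^ (1 / 2 : ℂ) := by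
    rw [hval, ← ofReal_one, ← ofReal_ofNat, ← ofReal_div, ← ofReal_cpow (by positivity),
      ← Real.sqrt_eq_rpow, Real.sqrt_sq (by positivity)]
  have hslit : (-(b * I * ((0 : ℝ) + b * I))⁻¹) ∈ slitPlane := by
    rw [hval, ofReal_mem_slitPlane]
    positivity
  rw [hsqrt]
  refine Tendsto.mono_left ?_ nhdsWithin_le_nhds
  have hv : ContinuousAt (fun t : ℝ ↦ (-(b * I * (t + b * I))⁻¹) ^ (1 / 2 : ℂ)) 0 :=
    (ContinuousAt.inv₀ (by fun_prop) (by simp [hb])).neg.cpow continuousAt_const hslit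
  have hu : ContinuousAt (fun t : ℝ ↦ (t + b * I) ^ (1 / 2 : ℂ)) 0 :=
    ContinuousAt.cpow (by fun_prop) continuousAt_const (by simp [mem_slitPlane_iff, hb])
  simpa [ContinuousAt] using hv.tendsto.mul hu.tendsto

/- The sum `∑ exp (-π τ n²)` blows up as `τ` tends to a rational point of the imaginary axis, with
a Gauss sum as leading coefficient. Inversion `τ ↦ τ⁻¹` exchanges the points `-2iq/p` and `ip/(2q)`,
so comparing both expansions relates the two Gauss sums. -/
theorem quadraticGaussSum_reciprocity (p q : ℕ) [NeZero p] [NeZero q] :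
    quadraticGaussSum (4 * q) (-p) =
      2 * (-2 * I * q / p) ^ (1 / 2 : ℂ) * quadraticGaussSum p q := by
  have hp : (p : ℂ) ≠ 0 := mod_cast NeZero.ne p
  have hq : (q : ℂ) ≠ 0 := mod_cast NeZero.ne q
  have hp_pos : (0 : ℝ) < p := mod_cast NeZero.pos p
  have hq_pos : (0 : ℝ) < q := mod_cast NeZero.pos q
  set b : ℝ := -(2 * q / p) with hb
  have hb0 : b ≠ 0 := by rw [hb]; exact (neg_neg_of_pos (by positivity)).ne
  have habs : |b| = 2 * q / p := by rw [hb, abs_neg, abs_of_pos (by positivity)]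
  have hc : -2 * I * q / p = b * I := by rw [hb]; push_cast; ring
  have hcp : -(2 * I * (q : ℤ) / p) = b * I := by rw [← hc]; push_cast; ring
  have hcinv : -(2 * I * (-p : ℤ) / (4 * q : ℕ)) = (b * I)⁻¹ := by
    rw [← hc]
    push_cast
    field_simp
    linear_combination 4 * I_sq
  have hp_lim := tendsto_cpow_mul_tsum_quadraticGaussSum p q (l := 𝓝[>] (0 : ℝ))
    (w := fun t ↦ t) (by simpa [← ofReal_inv] using tendsto_inv_nhdsGT_zero)
  have hq_lim := tendsto_cpow_mul_tsum_quadraticGaussSum (4 * q) (-p)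
    (tendsto_inv_re_mul_neg_inv hb0)
  simp only [sub_eq_add_neg, hcinv] at hq_lim
  simp only [sub_eq_add_neg, hcp] at hp_lim
  have hlim := ((tendsto_neg_inv_cpow_mul_cpow hb0).mul hp_lim).congr'
    (eventually_mem_nhdsWithin.mono fun t ht ↦ (cpow_mul_tsum_neg_inv hb0 ht).symm)
  have h := tendsto_nhds_unique hq_lim hlim
  rw [habs] at h
  rw [hc]
  push_cast at h
  field_simp at h
  linear_combination h / 2

end GaussSum

theorem quadraticGaussSum_four (a : ℤ) : quadraticGaussSum 4 a = 2 * (1 + I ^ a) := by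
  have hsum (f : ZMod 4 → ℂ) :
      ∑ r, f r = f (0 : ℤ) + f (1 : ℤ) + f (2 : ℤ) + f (3 : ℤ) := Fin.sum_univ_four f
  have hterm (r : ℤ) : ZMod.stdAddChar ((a : ZMod 4) * (r : ZMod 4) ^ 2) = (I ^ r ^ 2) ^ a := by
    rw [← Int.cast_pow, ← Int.cast_mul, ZMod.stdAddChar_coe, ← zpow_mul, mul_comm (r ^ 2)]
    conv_rhs => rw [← exp_pi_div_two_mul_I, ← exp_int_mul]
    push_cast
    ring_nf
  have h0 : I ^ (0 : ℤ) ^ 2 = 1 := by simp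
  have h1 : I ^ (1 : ℤ) ^ 2 = I := by simp
  have h2 : I ^ (2 : ℤ) ^ 2 = 1 := I_pow_four
  have h3 : I ^ (3 : ℤ) ^ 2 = I := by
    rw [show (3 : ℤ) ^ 2 = (9 : ℕ) by norm_num, zpow_natCast, I_pow_eq_pow_mod, pow_one]
  rw [quadraticGaussSum, hsum, hterm, hterm, hterm, hterm, h0, h1, h2, h3, one_zpow]
  ring

theorem neg_two_mul_I_div_cpow {x : ℝ} (hx : 0 < x) :
    (-2 * I / x) ^ (1 / 2 : ℂ) = (1 - I) / √x := by
  have hsq : -2 * I / x = ((1 - I) / √x) ^ 2 := by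
    rw [div_pow, ← ofReal_pow, Real.sq_sqrt hx.le]
    congr 1
    linear_combination -I_sq
  rw [hsq, one_div]
  exact sq_cpow_two_inv (by simpa [div_ofReal_re])

theorem quadraticGaussSum_one (p : ℕ) [NeZero p] :
    quadraticGaussSum p 1 = √p * (1 + I ^ (-p : ℤ)) / (1 - I) := by
  have hp : (0 : ℝ) < p := mod_cast NeZero.pos p
  have hp0 : ((√p : ℝ) : ℂ) ≠ 0 := mod_cast (Real.sqrt_pos.mpr hp).ne'
  have hI : 1 - I ≠ 0 := fun h ↦ by simpa using congrArg re h
  have h := quadraticGaussSum_reciprocity p 1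
  have hsqrt := neg_two_mul_I_div_cpow hp
  rw [ofReal_natCast] at hsqrt
  simp only [mul_one, Nat.cast_one, hsqrt] at h
  rw [quadraticGaussSum_four] at h
  field_simp at h ⊢
  linear_combination -h

theorem quadraticGaussSum_one_of_mod_four_eq_one {p : ℕ} [NeZero p] (hp : p % 4 = 1) :
    quadraticGaussSum p 1 = √p := by
  have hI : 1 - I ≠ 0 := fun h ↦ by simpa using congrArg re h
  rw [quadraticGaussSum_one, zpow_neg, zpow_natCast, I_pow_eq_pow_mod, hp, pow_one, inv_I,
    ← sub_eq_add_neg, mul_div_cancel_right₀ _ hI]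

theorem quadraticGaussSum_one_of_mod_four_eq_three {p : ℕ} [NeZero p] (hp : p % 4 = 3) :
    quadraticGaussSum p 1 = √p * I := by
  have hI : 1 - I ≠ 0 := fun h ↦ by simpa using congrArg re h
  rw [quadraticGaussSum_one, zpow_neg, zpow_natCast, I_pow_eq_pow_mod, hp, I_pow_three, inv_neg,
    inv_I, neg_neg, div_eq_iff hI]
  linear_combination √p * I_sq

section LegendreCharacter

variable (p : ℕ) [Fact p.Prime]

/-- The Legendre symbol modulo `p`, as a complex Dirichlet character. -/
noncomputable def legendreChar : DirichletCharacter ℂ p :=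
  (quadraticChar (ZMod p)).ringHomComp (Int.castRingHom ℂ)

theorem legendreChar_natCast (n : ℕ) : legendreChar p n = legendreSym p n := by
  simp [legendreChar, legendreSym]

theorem isQuadratic_legendreChar : MulChar.IsQuadratic (legendreChar p) :=
  (quadraticChar_isQuadratic (ZMod p)).comp _

variable {p}

theorem legendreChar_ne_one (hp : p ≠ 2) : legendreChar p ≠ 1 :=
  (MulChar.ringHomComp_ne_one_iff (Int.castRingHom ℂ).injective_int).mpr
    (quadraticChar_ne_one (by rwa [ZMod.ringChar_zmod_n]))

theorem isPrimitive_of_ne_one {χ : DirichletCharacter ℂ p} (hχ : χ ≠ 1) : χ.IsPrimitive :=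
  ((Nat.dvd_prime Fact.out).mp χ.conductor_dvd_level).resolve_left
    (χ.eq_one_iff_conductor_eq_one.not.mp hχ)

theorem gaussSum_legendreChar (hp : p ≠ 2) :
    gaussSum (legendreChar p) ZMod.stdAddChar = quadraticGaussSum p 1 := by
  have hcard (a : ZMod p) : ((Finset.univ.filter fun r : ZMod p ↦ r ^ 2 = a).card : ℂ) =
      legendreChar p a + 1 := by
    have h := quadraticChar_card_sqrts (by rwa [ZMod.ringChar_zmod_n]) a
    rw [toFinset_ofPred] at h
    simpa [legendreChar] using congrArg (Int.cast : ℤ → ℂ) h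
  have hsum : ∑ a : ZMod p, ZMod.stdAddChar a = (0 : ℂ) :=
    AddChar.sum_eq_zero_of_ne_one (by simpa using ZMod.isPrimitive_stdAddChar p one_ne_zero)
  calc gaussSum (legendreChar p) ZMod.stdAddChar
      = ∑ a : ZMod p, (legendreChar p a + 1) * ZMod.stdAddChar a := by
        simp [gaussSum, add_mul, Finset.sum_add_distrib, hsum]
    _ = ∑ a : ZMod p, ∑ r with r ^ 2 = a, ZMod.stdAddChar (r ^ 2) := by
        refine Finset.sum_congr rfl fun a _ ↦ ?_
        rw [← hcard, Finset.sum_congr rfl (fun r hr ↦ by rw [(Finset.mem_filter.mp hr).2]),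
          Finset.sum_const, nsmul_eq_mul]
    _ = quadraticGaussSum p 1 := by
        simp [quadraticGaussSum, Finset.sum_fiberwise]

theorem sum_range_natCast_zmod {M : Type*} [AddCommMonoid M] (N : ℕ) [NeZero N] (f : ZMod N → M) :
    ∑ n ∈ Finset.range N, f n = ∑ a, f a :=
  Finset.sum_nbij' (fun n ↦ (n : ZMod N)) ZMod.val (by simp) (by simp [ZMod.val_lt])
    (fun n hn ↦ ZMod.val_cast_of_lt (Finset.mem_range.mp hn)) (by simp) (by simp)

theorem sum_legendreSym_mul_stdAddChar (hp : p ≠ 2) (m : ℕ) :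
    ∑ n ∈ Finset.range p, (legendreSym p n : ℂ) * ZMod.stdAddChar (n * m : ZMod p) =
      quadraticGaussSum p 1 * legendreSym p m := by
  have h := gaussSum_mulShift_of_isPrimitive ZMod.stdAddChar
    (isPrimitive_of_ne_one (legendreChar_ne_one hp)) (m : ZMod p)
  rw [(isQuadratic_legendreChar p).inv, gaussSum_legendreChar hp, legendreChar_natCast] at h
  rw [mul_comm, ← h, gaussSum, ← sum_range_natCast_zmod p]
  simp [legendreChar_natCast, mul_comm (m : ZMod p)]

theorem sum_legendreSym (hp : p ≠ 2) : ∑ n ∈ Finset.range p, legendreSym p n = 0 := by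
  have h := quadraticChar_sum_zero (F := ZMod p) (by rwa [ZMod.ringChar_zmod_n])
  rw [← sum_range_natCast_zmod] at h
  simpa [legendreSym] using h

end LegendreCharacter

theorem sum_mul_sinZeta_one_eq {ι : Type*} (t : Finset ι) (a x y : ι → ℝ) {N : ℕ} [NeZero N]
    {ω : DirichletCharacter ℂ N} (hω : ω ≠ 1) (c : ℂ)
    (h : ∀ m : ℕ, ∑ i ∈ t, (a i * (Real.sin (2 * π * x i * m) - Real.sin (2 * π * y i * m)) : ℂ) =
      c * ω m) :
    ∑ i ∈ t, a i * (sinZeta (x i) 1 - sinZeta (y i) 1) = c * ω.LFunction 1 := by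
  refine eq_at_one_of_eq_of_one_lt_re
    (f := fun s ↦ ∑ i ∈ t, a i * (sinZeta (x i) s - sinZeta (y i) s))
    (g := fun s ↦ c * ω.LFunction s) ?_ ?_ fun s hs ↦ ?_
  · exact (continuous_finsetSum _ fun i _ ↦ continuous_const.mul
      ((differentiableAt_sinZeta _).continuous.sub
        (differentiableAt_sinZeta _).continuous)).continuousAt
  · exact ((DirichletCharacter.differentiable_LFunction hω).continuous.const_mul c).continuousAt
  · have hsin := hasSum_sum fun i (_ : i ∈ t) ↦ (((hasSum_nat_sinZeta (x i) hs).sub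
      (hasSum_nat_sinZeta (y i) hs)).mul_left (a i : ℂ))
    rw [DirichletCharacter.LFunction_eq_LSeries ω hs, LSeries, ← tsum_mul_left, ← hsin.tsum_eq]
    refine tsum_congr fun m ↦ ?_
    rcases eq_or_ne m 0 with rfl | hm
    · simp
    · rw [LSeries.term_of_ne_zero hm, ← mul_div_assoc, ← h, Finset.sum_div]
      exact Finset.sum_congr rfl fun i _ ↦ by ring

theorem stdAddChar_natCast (N : ℕ) [NeZero N] (n : ℕ) :
    ZMod.stdAddChar (n : ZMod N) = cexp ((2 * π * n / N : ℝ) * I) := by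
  have h := ZMod.stdAddChar_coe (N := N) n
  push_cast at h ⊢
  rw [h]
  ring_nf

theorem sum_legendreSym_mul_sin_sub_sin {p : ℕ} [Fact p.Prime] (hp : p ≠ 2) (q : ℕ) [NeZero q]
    (m : ℕ) :
    ∑ n ∈ Finset.range p, (legendreSym p n : ℝ) *
      (Real.sin (2 * π * (n / p : ℝ) * m) - Real.sin (2 * π * (n / p - 1 / q : ℝ) * m)) =
      (quadraticGaussSum p 1 * (1 - ZMod.stdAddChar (-m : ZMod q))).im * legendreSym p m := by
  have hψp (n : ℕ) :
      ZMod.stdAddChar (n * m : ZMod p) = cexp ((2 * π * (n / p : ℝ) * m : ℝ) * I) := by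
    rw [← Nat.cast_mul, stdAddChar_natCast]
    push_cast
    ring_nf
  have hψ (n : ℕ) : ZMod.stdAddChar (n * m : ZMod p) * ZMod.stdAddChar (-m : ZMod q) =
      cexp ((2 * π * (n / p - 1 / q : ℝ) * m : ℝ) * I) := by
    rw [hψp, AddChar.map_neg_eq_inv, stdAddChar_natCast, ← exp_neg, ← exp_add]
    push_cast
    ring_nf
  rw [← im_mul_ofReal, ofReal_intCast, mul_right_comm, ← sum_legendreSym_mul_stdAddChar hp,
    Finset.sum_mul, im_sum]
  refine Finset.sum_congr rfl fun n _ ↦ ?_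
  rw [mul_assoc (legendreSym p n : ℂ), mul_one_sub (ZMod.stdAddChar _), hψ, hψp, ← ofReal_intCast,
    im_ofReal_mul, sub_im, exp_ofReal_mul_I_im, exp_ofReal_mul_I_im]

theorem sinZeta_one_sub_sinZeta_one {x y : ℝ} (hx : x ∈ Ioo (0 : ℝ) 1) (hy : y ∈ Ioo (0 : ℝ) 1)
    (hxy : x ≠ y) :
    sinZeta x 1 - sinZeta (x - y : ℝ) 1 = π * ((if x < y then 1 else 0) - y) := by
  rw [sinZeta_one hx]
  split_ifs with h
  · rw [← AddCircle.coe_add_period 1 (x - y),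
      sinZeta_one ⟨by linarith [hx.1, hy.2], by linarith⟩]
    push_cast
    ring
  · rw [sinZeta_one ⟨by linarith [lt_of_le_of_ne (not_lt.mp h) hxy.symm], by linarith [hx.2, hy.1]⟩]
    push_cast
    ring

section DirichletMul

variable {p q : ℕ} {χ : DirichletCharacter ℂ p} {κ : DirichletCharacter ℂ q}

theorem dirichletCharacter_mul_natCast (χ : DirichletCharacter ℂ p) (κ : DirichletCharacter ℂ q)
    (n : ℕ) : χ.mul κ n = χ n * κ n := by
  by_cases hn : IsCoprime (n : ℤ) (p.lcm q : ℕ)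
  · have hχ := χ.changeLevel_eq_cast_of_dvd' (p.dvd_lcm_left q) hn
    have hκ := κ.changeLevel_eq_cast_of_dvd' (p.dvd_lcm_right q) hn
    rw [Int.cast_natCast, Int.cast_natCast] at hχ hκ
    rw [DirichletCharacter.mul, MulChar.mul_apply, hχ, hκ]
  · rw [Nat.isCoprime_iff_coprime] at hn
    rw [MulChar.map_nonunit _ ((ZMod.isUnit_iff_coprime _ _).not.mpr hn), eq_comm, mul_eq_zero]
    by_contra! h
    have hp := (ZMod.isUnit_iff_coprime n p).mp (not_imp_comm.mp χ.map_nonunit h.1)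
    have hq := (ZMod.isUnit_iff_coprime n q).mp (not_imp_comm.mp κ.map_nonunit h.2)
    exact hn ((hp.mul_right hq).coprime_dvd_right (p.lcm_dvd_mul q))

theorem dirichletCharacter_mul_ne_one [NeZero p] [NeZero q] (hpq : p.Coprime q) (hχ : χ ≠ 1)
    (κ : DirichletCharacter ℂ q) : χ.mul κ ≠ 1 := by
  intro h
  have : NeZero (p.lcm q) := ⟨Nat.lcm_ne_zero (NeZero.ne p) (NeZero.ne q)⟩
  have hcond := congrArg DirichletCharacter.conductor (eq_inv_of_mul_eq_one_left h)
  rw [DirichletCharacter.conductor_inv, DirichletCharacter.conductor_changeLevel,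
    DirichletCharacter.conductor_changeLevel] at hcond
  exact hχ (χ.eq_one_iff_conductor_eq_one.mpr (Nat.eq_one_of_dvd_coprimes hpq χ.conductor_dvd_level
    (hcond ▸ κ.conductor_dvd_level)))

theorem isQuadratic_dirichletCharacter_mul (hχ : MulChar.IsQuadratic χ)
    (hκ : MulChar.IsQuadratic κ) : MulChar.IsQuadratic (χ.mul κ) := by
  rw [MulChar.isQuadratic_iff_sq_eq_one] at *
  rw [DirichletCharacter.mul, mul_pow, ← map_pow, ← map_pow, hχ, hκ, map_one, map_one, one_mul]

end DirichletMul

section LegendreSums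

variable {p : ℕ} [Fact p.Prime]

theorem natCast_div_ne_one_div {q : ℕ} (hq : 1 < q) (hpq : p.Coprime q) (n : ℕ) :
    (n / p : ℝ) ≠ 1 / q := by
  have hp : (p : ℝ) ≠ 0 := mod_cast (Fact.out : p.Prime).ne_zero
  intro h
  rw [div_eq_div_iff hp (by positivity), one_mul] at h
  have h' : n * q = p := mod_cast h
  exact hq.ne' (hpq.symm.eq_one_of_dvd (Dvd.intro_left n h'))

theorem sum_legendreSym_mul_sinZeta_sub_sinZeta (hp : p ≠ 2) {x : ℝ} (hx : x ∈ Ioo (0 : ℝ) 1)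
    (hxp : ∀ n : ℕ, (n / p : ℝ) ≠ x) :
    ∑ n ∈ Finset.range p, ((legendreSym p n : ℝ) : ℂ) *
        (sinZeta (n / p : ℝ) 1 - sinZeta (n / p - x : ℝ) 1) =
      π * ∑ n ∈ (Finset.range p).filter (fun n : ℕ ↦ 0 < n ∧ (n / p : ℝ) < x), legendreSym p n := by
  have hp0 : (0 : ℝ) < p := mod_cast (Fact.out : p.Prime).pos
  have hterm (n : ℕ) (hn : n ∈ Finset.range p) : ((legendreSym p n : ℝ) : ℂ) *
      (sinZeta (n / p : ℝ) 1 - sinZeta (n / p - x : ℝ) 1) =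
      π * ((if 0 < n ∧ (n / p : ℝ) < x then (legendreSym p n : ℂ) else 0) -
        x * legendreSym p n) := by
    rcases n.eq_zero_or_pos with rfl | hn0
    · simp
    · have hn1 : (n / p : ℝ) ∈ Ioo (0 : ℝ) 1 :=
        ⟨by positivity, (div_lt_one hp0).mpr (mod_cast Finset.mem_range.mp hn)⟩
      rw [sinZeta_one_sub_sinZeta_one hn1 hx (hxp n)]
      simp only [hn0, true_and]
      split_ifs <;> push_cast <;> ring
  rw [Finset.sum_congr rfl hterm, ← Finset.mul_sum, Finset.sum_sub_distrib, ← Finset.sum_filter,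
    ← Finset.mul_sum, ← Int.cast_sum, ← Int.cast_sum, sum_legendreSym hp]
  simp

theorem sum_legendreSym_pos_of_gaussSum_im (hp : p ≠ 2) {q : ℕ} [NeZero q] (hq : 1 < q)
    (hpq : p.Coprime q) {κ : DirichletCharacter ℂ q} (hκ : MulChar.IsQuadratic κ) {c : ℝ}
    (hc : 0 < c)
    (h : ∀ j : ZMod q, (quadraticGaussSum p 1 * (1 - ZMod.stdAddChar (-j))).im = c * κ j) :
    0 < ∑ n ∈ (Finset.range p).filter (fun n : ℕ ↦ 0 < n ∧ (n : ℚ) < p / q), legendreSym p n := by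
  have : NeZero (p.lcm q) := ⟨Nat.lcm_ne_zero (NeZero.ne p) (NeZero.ne q)⟩
  have hω := dirichletCharacter_mul_ne_one hpq (legendreChar_ne_one hp) κ
  have hx : (1 / q : ℝ) ∈ Ioo (0 : ℝ) 1 := ⟨by positivity, by
    rw [one_div]; exact inv_lt_one_of_one_lt₀ (mod_cast hq)⟩
  have hfourier (m : ℕ) : ∑ n ∈ Finset.range p, (((legendreSym p n : ℝ) : ℂ) *
      (Real.sin (2 * π * (n / p : ℝ) * m) - Real.sin (2 * π * (n / p - 1 / q : ℝ) * m))) =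
      c * (legendreChar p).mul κ m := by
    have hsin := congrArg ofReal (sum_legendreSym_mul_sin_sub_sin hp q m)
    push_cast [h] at hsin ⊢
    rw [dirichletCharacter_mul_natCast, legendreChar_natCast, hsin]
    ring
  have hL := sum_mul_sinZeta_one_eq _ _ _ _ hω c hfourier
  rw [sum_legendreSym_mul_sinZeta_sub_sinZeta hp hx (natCast_div_ne_one_div hq hpq)] at hL
  have hpos : 0 < c * ((legendreChar p).mul κ).LFunction 1 :=
    mul_pos (mod_cast hc) (LFunction_one_pos_of_isQuadratic
      (isQuadratic_dirichletCharacter_mul (isQuadratic_legendreChar p) hκ) hω)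
  have hiff (n : ℕ) : (n : ℚ) < p / q ↔ (n / p : ℝ) < 1 / q := by
    have hp0 : (0 : ℝ) < p := mod_cast (Fact.out : p.Prime).pos
    rw [← Rat.cast_lt (K := ℝ), div_lt_iff₀ hp0]
    push_cast
    rw [one_div_mul_eq_div]
  simp only [hiff]
  rw [← hL] at hpos
  have h' := pos_of_mul_pos_right hpos (by exact_mod_cast Real.pi_pos.le)
  exact_mod_cast h'

theorem sum_legendreSym_pos_of_mod_four_eq_one (hp : p % 4 = 1) {q : ℕ} [NeZero q] (hq : 1 < q)
    (hpq : p.Coprime q) {κ : DirichletCharacter ℂ q} (hκ : MulChar.IsQuadratic κ) {c : ℝ}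
    (hc : 0 < c) (h : ∀ j : ZMod q, (ZMod.stdAddChar j).im = c * κ j) :
    0 < ∑ n ∈ (Finset.range p).filter (fun n : ℕ ↦ 0 < n ∧ (n : ℚ) < p / q), legendreSym p n := by
  have hp0 : 0 < √p := Real.sqrt_pos.mpr (mod_cast (Fact.out : p.Prime).pos)
  refine sum_legendreSym_pos_of_gaussSum_im (by omega) hq hpq hκ (mul_pos hp0 hc) fun j ↦ ?_
  rw [quadraticGaussSum_one_of_mod_four_eq_one hp, im_ofReal_mul, sub_im, one_im, zero_sub,
    AddChar.map_neg_eq_conj, conj_im, neg_neg]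
  push_cast
  rw [h, mul_assoc]

theorem sum_legendreSym_pos_of_mod_four_eq_three (hp : p % 4 = 3) {q : ℕ} [NeZero q] (hq : 1 < q)
    (hpq : p.Coprime q) {κ : DirichletCharacter ℂ q} (hκ : MulChar.IsQuadratic κ) {c : ℝ}
    (hc : 0 < c) (h : ∀ j : ZMod q, 1 - (ZMod.stdAddChar j).re = c * κ j) :
    0 < ∑ n ∈ (Finset.range p).filter (fun n : ℕ ↦ 0 < n ∧ (n : ℚ) < p / q), legendreSym p n := by
  have hp0 : 0 < √p := Real.sqrt_pos.mpr (mod_cast (Fact.out : p.Prime).pos)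
  refine sum_legendreSym_pos_of_gaussSum_im (by omega) hq hpq hκ (mul_pos hp0 hc) fun j ↦ ?_
  rw [quadraticGaussSum_one_of_mod_four_eq_three hp, mul_assoc, im_ofReal_mul, I_mul_im, sub_re,
    one_re, AddChar.map_neg_eq_conj, conj_re]
  push_cast
  rw [h, mul_assoc]

end LegendreSums

section SmallModuli

theorem sin_two_pi_div_three : Real.sin (2 * π / 3) = √3 / 2 := by
  rw [show 2 * π / 3 = π - π / 3 by ring, Real.sin_pi_sub, Real.sin_pi_div_three]

theorem sin_four_pi_div_three : Real.sin (2 * π * 2 / 3) = -(√3 / 2) := by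
  rw [show 2 * π * 2 / 3 = π / 3 + π by ring, Real.sin_add_pi, Real.sin_pi_div_three]

theorem cos_two_pi_div_three : Real.cos (2 * π / 3) = -1 / 2 := by
  rw [show 2 * π / 3 = π - π / 3 by ring, Real.cos_pi_sub, Real.cos_pi_div_three, neg_div]

theorem cos_four_pi_div_three : Real.cos (2 * π * 2 / 3) = -1 / 2 := by
  rw [show 2 * π * 2 / 3 = π / 3 + π by ring, Real.cos_add_pi, Real.cos_pi_div_three, neg_div]

theorem stdAddChar_natCast_re (N : ℕ) [NeZero N] (n : ℕ) :
    (ZMod.stdAddChar (n : ZMod N)).re = Real.cos (2 * π * n / N) := by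
  rw [stdAddChar_natCast, exp_ofReal_mul_I_re]

theorem stdAddChar_natCast_im (N : ℕ) [NeZero N] (n : ℕ) :
    (ZMod.stdAddChar (n : ZMod N)).im = Real.sin (2 * π * n / N) := by
  rw [stdAddChar_natCast, exp_ofReal_mul_I_im]

theorem exists_lt_natCast_eq {N : ℕ} [NeZero N] (j : ZMod N) : ∃ n < N, (n : ZMod N) = j :=
  ⟨j.val, j.val_lt, ZMod.natCast_zmod_val j⟩

theorem isQuadratic_one (N : ℕ) : MulChar.IsQuadratic (1 : DirichletCharacter ℂ N) :=
  MulChar.isQuadratic_iff_sq_eq_one.mpr (one_pow 2)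

theorem one_sub_re_stdAddChar_two (j : ZMod 2) :
    1 - (ZMod.stdAddChar j).re = (2 : ℝ) * (1 : DirichletCharacter ℂ 2) j := by
  obtain ⟨n, hn, rfl⟩ := exists_lt_natCast_eq j
  have h0 : (1 : DirichletCharacter ℂ 2) 0 = 0 := MulChar.map_nonunit _ (by decide)
  rw [stdAddChar_natCast_re]
  interval_cases n
  · simp [h0]
  · norm_num

theorem one_sub_re_stdAddChar_three (j : ZMod 3) :
    1 - (ZMod.stdAddChar j).re = (3 / 2 : ℝ) * (1 : DirichletCharacter ℂ 3) j := by
  obtain ⟨n, hn, rfl⟩ := exists_lt_natCast_eq j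
  have h0 : (1 : DirichletCharacter ℂ 3) 0 = 0 := MulChar.map_nonunit _ (by decide)
  have h2 : IsUnit (2 : ZMod 3) := by decide
  rw [stdAddChar_natCast_re]
  interval_cases n
  · simp [h0]
  · norm_num [cos_two_pi_div_three]
  · norm_num [cos_four_pi_div_three, MulChar.one_apply h2]

theorem im_stdAddChar_three (j : ZMod 3) :
    (ZMod.stdAddChar j).im = (√3 / 2 : ℝ) * legendreChar 3 j := by
  obtain ⟨n, hn, rfl⟩ := exists_lt_natCast_eq j
  have h2 : legendreSym 3 2 = -1 := by decide
  rw [stdAddChar_natCast_im, legendreChar_natCast]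
  interval_cases n
  · simp
  · norm_num [sin_two_pi_div_three]
  · norm_num [sin_four_pi_div_three, h2]

theorem im_stdAddChar_four (j : ZMod 4) :
    (ZMod.stdAddChar j).im = (1 : ℝ) * ZMod.χ₄.ringHomComp (Int.castRingHom ℂ) j := by
  obtain ⟨n, hn, rfl⟩ := exists_lt_natCast_eq j
  have h2 : ZMod.χ₄ 2 = 0 := rfl
  have h3 : ZMod.χ₄ 3 = -1 := rfl
  have hsin1 : Real.sin (2 * π / 4) = 1 := by
    rw [show 2 * π / 4 = π / 2 by ring, Real.sin_pi_div_two]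
  have hsin2 : Real.sin (2 * π * 2 / 4) = 0 := by
    rw [show 2 * π * 2 / 4 = π by ring, Real.sin_pi]
  have hsin3 : Real.sin (2 * π * 3 / 4) = -1 := by
    rw [show 2 * π * 3 / 4 = π / 2 + π by ring, Real.sin_add_pi, Real.sin_pi_div_two]
  rw [stdAddChar_natCast_im]
  interval_cases n
  · simp
  · norm_num [hsin1]
  · norm_num [hsin2, h2]
  · norm_num [hsin3, h3]

end SmallModuli

/-- Theorem 7.1 (Dirichlet): for an odd prime `p`:
(i) if `p ≡ 3 mod 4` then `∑_{0<n<p/2} χ_p(n) > 0`;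
(ii) if `p ≡ 1 mod 4` then `∑_{0<n<p/4} χ_p(n) > 0`;
(iii) if `p > 3` then `∑_{0<n<p/3} χ_p(n) > 0`. -/
theorem quadratic_excess_pos (p : ℕ) [Fact p.Prime] (hp2 : p ≠ 2) :
    (p % 4 = 3 →
      0 < ∑ n ∈ (Finset.range p).filter (fun n : ℕ => 0 < n ∧ (n : ℚ) < (p : ℚ) / 2),
        legendreSym p (n : ℤ)) ∧
    (p % 4 = 1 →
      0 < ∑ n ∈ (Finset.range p).filter (fun n : ℕ => 0 < n ∧ (n : ℚ) < (p : ℚ) / 4),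
        legendreSym p (n : ℤ)) ∧
    (3 < p →
      0 < ∑ n ∈ (Finset.range p).filter (fun n : ℕ => 0 < n ∧ (n : ℚ) < (p : ℚ) / 3),
        legendreSym p (n : ℤ)) := by
  have hp_odd : p % 2 = 1 := (Fact.out : p.Prime).eq_two_or_odd.resolve_left hp2
  refine ⟨fun h3 ↦ ?_, fun h1 ↦ ?_, fun hlt ↦ ?_⟩
  · exact mod_cast sum_legendreSym_pos_of_mod_four_eq_three h3 one_lt_two
      (Nat.coprime_two_right.mpr (Nat.odd_iff.mpr hp_odd)) (isQuadratic_one 2) two_pos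
      one_sub_re_stdAddChar_two
  · exact mod_cast sum_legendreSym_pos_of_mod_four_eq_one h1 (q := 4) (by norm_num)
      (Nat.Coprime.pow_right 2 (Nat.coprime_two_right.mpr (Nat.odd_iff.mpr hp_odd)))
      (ZMod.isQuadratic_χ₄.comp _) one_pos im_stdAddChar_four
  · have hcop : p.Coprime 3 := (Nat.coprime_primes Fact.out Nat.prime_three).mpr hlt.ne'
    obtain h1 | h3 : p % 4 = 1 ∨ p % 4 = 3 := by omega
    · exact mod_cast sum_legendreSym_pos_of_mod_four_eq_one h1 (by norm_num) hcop
        (isQuadratic_legendreChar 3) (by positivity) im_stdAddChar_three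
    · exact mod_cast sum_legendreSym_pos_of_mod_four_eq_three h3 (by norm_num) hcop
        (isQuadratic_one 3) (by norm_num) one_sub_re_stdAddChar_three
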